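/- arXiv:2601.13855 — 2 statements merged into one kernel-verified Lean document; each statement's English description precedes it below -/
import Mathlib

section
/- Let N₁ : ℝ → ℝ satisfy N₁(G) ≥ 2 for all large G and ∫₂^{N₁(G)} (−P(t)) dt = a·G + O(1) as G → ∞. Let g : ℝ → ℝ satisfy (i) g(T) − T ∼ (1−c)·T/ln T as T → ∞, and (ii) for every fixed l > 0, ∫_{g(T)}^{g(T+2l)} |ζ(1/2+it)|² dt = (1+o(1))·2l·ln T as T → ∞. Then for all positive integers x, y, z and every integer n ≥ 3, writing F = (xⁿ + yⁿ)/zⁿ, one has lim_{τ→∞} (1/τ)·{ [∫_{N₁(Fτ)}^{N₁(g(Fτ))} (−P(t)) dt] · [∫_{g(Fτ)}^{g(Fτ + 1/(a(1−c)))} |ζ(1/2+it)|² dt] } = F. -/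
open Filter Real Asymptotics MeasureTheory

noncomputable def pichar (t : ℝ) : ℝ := (Nat.primeCounting ⌊t⌋₊ : ℝ)

noncomputable def P (t : ℝ) : ℝ := pichar t - ∫ u in (2:ℝ)..t, 1 / Real.log u

noncomputable def a : ℝ := Real.exp 4.5

noncomputable def c : ℝ := Real.eulerMascheroniConstant

noncomputable def Z (t : ℝ) : ℝ := ‖riemannZeta (1/2 + (t : ℂ) * Complex.I)‖ ^ 2

/-!
Write `J G = ∫₂^{N₁ G} (-P)`, so that `J G = a G + O(1)`. The first integral at `T` is
`J (g T) - J T = a (g T - T) + O(1)`, and since `g T - T ∼ (1 - c) T / log T` tends to infinity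
(here `c < 1` matters) it is asymptotic to `a (1 - c) T / log T`. The second integral, over a window
of length `δ`, is asymptotic to `δ log T`. The logarithms cancel and the product is asymptotic to
`a (1 - c) δ T`; the window `δ = 1 / (a (1 - c))` normalizes the constant to `1`.
-/

lemma tendsto_div_log_atTop : Tendsto (fun x : ℝ => x / log x) atTop atTop := by
  have hlim : Tendsto (fun x : ℝ => log x / x) atTop (nhdsWithin 0 (Set.Ioi 0)) := by
    refine tendsto_nhdsWithin_iff.2 ⟨isLittleO_log_id_atTop.tendsto_div_nhds_zero, ?_⟩
    filter_upwards [eventually_gt_atTop 1] with x hx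
    exact div_pos (log_pos hx) (by linarith)
  simpa only [Pi.inv_def, inv_div] using hlim.inv_tendsto_nhdsGT_zero

lemma tendsto_one_div_mul_comp_const_mul {f : ℝ → ℝ} {κ F : ℝ}
    (hf : f ~[atTop] fun T => κ * T) (hF : 0 < F) :
    Tendsto (fun τ => 1 / τ * f (F * τ)) atTop (nhds (κ * F)) := by
  have hscaled : (fun τ => f (F * τ)) ~[atTop] fun τ => κ * (F * τ) :=
    hf.comp_tendsto (tendsto_id.const_mul_atTop hF)
  refine ((IsEquivalent.refl (u := fun τ : ℝ => 1 / τ)).mul hscaled).symm.tendsto_nhds ?_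
  refine tendsto_const_nhds.congr' ?_
  filter_upwards [eventually_ne_atTop 0] with τ hτ
  simp only [Pi.mul_apply]
  field_simp

section Increments

variable {g w : ℝ → ℝ} {α : ℝ}

lemma isEquivalent_comp_sub_of_sub_linear_isBigO_one {J : ℝ → ℝ} (hα : α ≠ 0)
    (hJ : (fun G => J G - α * G) =O[atTop] fun _ => (1 : ℝ))
    (hw : Tendsto w atTop atTop) (hg : Tendsto g atTop atTop)
    (hgw : (fun T => g T - T) ~[atTop] w) :
    (fun T => J (g T) - J T) ~[atTop] fun T => α * w T := by
  have hmain : (fun T => α * (g T - T)) ~[atTop] fun T => α * w T :=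
    (IsEquivalent.refl (u := fun _ : ℝ => α)).mul hgw
  have hone : (fun _ : ℝ => (1 : ℝ)) =o[atTop] fun T => α * w T :=
    (isLittleO_const_left.2 (Or.inr (tendsto_norm_atTop_atTop.comp hw))).trans_isBigO
      (isBigO_self_const_mul hα w atTop)
  have herror := ((hJ.comp_tendsto hg).sub hJ).trans_isLittleO hone
  refine (hmain.add_isLittleO herror).congr_left (Eventually.of_forall fun T => ?_)
  simp only [Pi.add_apply, Function.comp_apply]
  ring

lemma isEquivalent_integral_comp {f N : ℝ → ℝ} {x₀ : ℝ} (hα : α ≠ 0)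
    (hf : ∀ᶠ G in atTop, IntervalIntegrable f volume x₀ (N G))
    (hN : (fun G => (∫ t in x₀..N G, f t) - α * G) =O[atTop] fun _ => (1 : ℝ))
    (hw : Tendsto w atTop atTop) (hgw : (fun T => g T - T) ~[atTop] w) :
    (fun T => ∫ t in N T..N (g T), f t) ~[atTop] fun T => α * w T := by
  have hg : Tendsto g atTop atTop := by
    simpa only [id_eq, sub_add_cancel] using
      (hgw.symm.tendsto_atTop hw).atTop_add_atTop tendsto_id
  refine (isEquivalent_comp_sub_of_sub_linear_isBigO_one hα hN hw hg hgw).congr_left ?_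
  filter_upwards [hf, hg.eventually hf] with T hT hgT
  exact intervalIntegral.integral_interval_sub_left hgT hT

end Increments

lemma intervalIntegrable_one_div_log {u v : ℝ} (hu : 1 < u) (hv : 1 < v) :
    IntervalIntegrable (fun t => 1 / log t) volume u v := by
  have hone_lt : ∀ t ∈ Set.uIcc u v, 1 < t := fun t ht => (lt_min hu hv).trans_le ht.1
  refine ContinuousOn.intervalIntegrable (continuousOn_const.div ?_ ?_)
  · exact continuousOn_log.mono fun t ht => (zero_lt_one.trans (hone_lt t ht)).ne'
  · exact fun t ht => (log_pos (hone_lt t ht)).ne'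

lemma monotone_pichar : Monotone pichar := fun _ _ h =>
  Nat.cast_le.2 (Nat.monotone_primeCounting (Nat.floor_mono h))

lemma intervalIntegrable_P {u v : ℝ} (hu : 1 < u) (hv : 1 < v) :
    IntervalIntegrable P volume u v := by
  have from_two {b : ℝ} (hb : 1 < b) : IntervalIntegrable P volume 2 b :=
    monotone_pichar.intervalIntegrable.sub
      (intervalIntegral.continuousOn_primitive_interval'
        (intervalIntegrable_one_div_log one_lt_two hb) Set.left_mem_uIcc).intervalIntegrable
  exact (from_two hu).symm.trans (from_two hv)

lemma a_pos : 0 < a := exp_pos _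

lemma c_lt_one : c < 1 := eulerMascheroniConstant_lt_two_thirds.trans (by norm_num)

theorem stmt_8_general {N₁ g : ℝ → ℝ} {δ F : ℝ}
    (hN2 : ∀ᶠ G in atTop, 2 ≤ N₁ G)
    (hN : (fun G => (∫ t in (2 : ℝ)..N₁ G, -P t) - a * G) =O[atTop] fun _ => (1 : ℝ))
    (hg : (fun T => g T - T) ~[atTop] fun T => (1 - c) * T / log T)
    (hZ : (fun T => ∫ t in g T..g (T + δ), Z t) ~[atTop] fun T => δ * log T)
    (hF : 0 < F) :
    Tendsto (fun τ => (1 / τ) *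
      ((∫ t in N₁ (F * τ)..N₁ (g (F * τ)), -P t) * ∫ t in g (F * τ)..g (F * τ + δ), Z t))
      atTop (nhds (a * (1 - c) * δ * F)) := by
  have hw : Tendsto (fun T => (1 - c) * T / log T) atTop atTop := by
    simpa only [mul_div_assoc] using
      tendsto_div_log_atTop.const_mul_atTop (sub_pos.2 c_lt_one)
  have hint : ∀ᶠ G in atTop, IntervalIntegrable (fun t => -P t) volume 2 (N₁ G) :=
    hN2.mono fun G hG => (intervalIntegrable_P one_lt_two (one_lt_two.trans_le hG)).neg
  have hfirst := isEquivalent_integral_comp a_pos.ne' hint hN hw hg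
  refine tendsto_one_div_mul_comp_const_mul ((hfirst.mul hZ).congr_right ?_) hF
  filter_upwards [eventually_gt_atTop 1] with T hT
  have hlog : log T ≠ 0 := (log_pos hT).ne'
  simp only [Pi.mul_apply]
  field_simp

/-- Corollary 1: the first `Pζ`-functional attains the value of every Fermat rational. -/
theorem stmt_8 (N₁ : ℝ → ℝ)
    (hN2 : ∀ᶠ G in atTop, 2 ≤ N₁ G)
    (hN : (fun G => (∫ t in (2:ℝ)..N₁ G, -P t) - a * G) =O[atTop] (fun _ => (1:ℝ)))
    (g : ℝ → ℝ)
    (hg1 : (fun T => g T - T) ~[atTop] (fun T => (1 - c) * T / Real.log T))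
    (hg2 : ∀ l : ℝ, 0 < l →
      (fun T => ∫ t in g T..g (T + 2 * l), Z t) ~[atTop] (fun T => 2 * l * Real.log T))
    (x y z n : ℕ) (hx : 0 < x) (hy : 0 < y) (hz : 0 < z) (hn : 3 ≤ n) :
    Tendsto (fun τ => (1 / τ) *
      ((∫ t in N₁ (((x ^ n + y ^ n : ℝ) / (z ^ n : ℝ)) * τ)..
          N₁ (g (((x ^ n + y ^ n : ℝ) / (z ^ n : ℝ)) * τ)), -P t) *
        ∫ t in g (((x ^ n + y ^ n : ℝ) / (z ^ n : ℝ)) * τ)..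
          g (((x ^ n + y ^ n : ℝ) / (z ^ n : ℝ)) * τ + 1 / (a * (1 - c))), Z t))
      atTop (nhds ((x ^ n + y ^ n : ℝ) / (z ^ n : ℝ))) := by
  have hκ : 0 < a * (1 - c) := mul_pos a_pos (sub_pos.2 c_lt_one)
  have hZ := hg2 (1 / (a * (1 - c)) / 2) (by positivity)
  simp only [mul_div_cancel₀ _ (two_ne_zero' ℝ)] at hZ
  have hF : 0 < (x ^ n + y ^ n : ℝ) / (z ^ n : ℝ) := by positivity
  simpa only [mul_one_div_cancel hκ.ne', one_mul] using stmt_8_general hN2 hN hg1 hZ hF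
end

section
/- Let N₁ : ℝ → ℝ satisfy N₁(G) ≥ 2 for all large G and ∫₂^{N₁(G)} (−P(t)) dt = a·G + O(1) as G → ∞. Let g : ℝ → ℝ satisfy g(T) − T ∼ (1−c)·T/ln T as T → ∞, and assume the prime number theorem in the form π(ρ) ∼ ρ/ln ρ as ρ → ∞. Then the following two statements are equivalent: (A) for all positive integers x, y, z and every integer n ≥ 3, writing F = (xⁿ + yⁿ)/zⁿ, one has lim_{ρ→∞} (1/π(ρ)) · ∫_{N₁(Fρ/(a(1−c)))}^{N₁(g(Fρ/(a(1−c))))} (−P(t)) dt ≠ 1; (B) for all positive integers x, y, z and every integer n ≥ 3, xⁿ + yⁿ ≠ zⁿ (the Fermat–Wiles theorem). -/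
open Filter Real Asymptotics MeasureTheory

/-!
The limit in the first condition always exists and equals the Fermat rational `F` itself.
Subtracting the formula for `∫ t in 2..N₁ G, -P t` at `G = T` from the one at `G = g T` gives
`∫ t in N₁ T..N₁ (g T), -P t = a * (g T - T) + O(1) ∼ a * (1 - c) * (T / log T)`.
For `T = F * ρ / (a * (1 - c))` this is `∼ F * (ρ / log ρ) ∼ F * π(ρ)`, because
`log (k * ρ) ∼ log ρ` for every fixed `k ≠ 0`.
-/

lemma isEquivalent_sub_of_sub_mul_isBigO_one {ι 𝕜 : Type*} [NormedField 𝕜]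
    {l : Filter ι} {m : Filter 𝕜} {Φ : 𝕜 → 𝕜} {α : 𝕜} {u v h : ι → 𝕜} (hα : α ≠ 0)
    (hΦ : (fun x => Φ x - α * x) =O[m] (fun _ => (1 : ℝ)))
    (hu : Tendsto u l m) (hv : Tendsto v l m)
    (huv : (fun i => u i - v i) ~[l] h) (hh : (fun _ => (1 : ℝ)) =o[l] h) :
    (fun i => Φ (u i) - Φ (v i)) ~[l] fun i => α * h i := by
  have herr : (fun i => (Φ (u i) - α * u i) - (Φ (v i) - α * v i)) =o[l] fun i => α * h i :=
    (((hΦ.comp_tendsto hu).trans_isLittleO hh).sub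
      ((hΦ.comp_tendsto hv).trans_isLittleO hh)).const_mul_right hα
  have hmain : (fun i => α * (u i - v i)) ~[l] fun i => α * h i :=
    IsEquivalent.refl.mul huv
  refine (hmain.add_isLittleO herr).congr_left (.of_forall fun i => ?_)
  simp only [Pi.add_apply]
  ring

lemma tendsto_atTop_of_sub_isLittleO {g : ℝ → ℝ}
    (hg : (fun T => g T - T) =o[atTop] fun T => T) : Tendsto g atTop atTop :=
  IsEquivalent.tendsto_atTop (IsEquivalent.symm hg) tendsto_id

lemma isLittleO_one_div_log : (fun _ => (1 : ℝ)) =o[atTop] fun T : ℝ => T / log T := by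
  have h : (fun T => log T * (log T)⁻¹) =o[atTop] fun T => T * (log T)⁻¹ :=
    isLittleO_log_id_atTop.mul_isBigO (isBigO_refl _ _)
  refine h.congr' ?_ .rfl
  filter_upwards [eventually_gt_atTop 1] with T hT
  exact mul_inv_cancel₀ (log_pos hT).ne'

lemma isLittleO_div_log_id : (fun T : ℝ => T / log T) =o[atTop] fun T => T := by
  have hinv : (fun T => (log T)⁻¹) =o[atTop] (fun _ => (1 : ℝ)) :=
    (isLittleO_one_iff ℝ).2 tendsto_log_atTop.inv_tendsto_atTop
  simpa only [mul_one, div_eq_mul_inv] using (isBigO_refl (fun T : ℝ => T) atTop).mul_isLittleO hinv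

lemma isEquivalent_log_const_mul {k : ℝ} (hk : k ≠ 0) :
    (fun ρ => log (k * ρ)) ~[atTop] log := by
  have hconst : (fun _ : ℝ => log k) =o[atTop] log := isLittleO_const_log_atTop
  refine (hconst.add_isEquivalent .refl).congr_left ?_
  filter_upwards [eventually_ne_atTop 0] with ρ hρ
  exact (log_mul hk hρ).symm

lemma isEquivalent_const_mul_div_log {k : ℝ} (hk : k ≠ 0) :
    (fun ρ => k * ρ / log (k * ρ)) ~[atTop] fun ρ => k * (ρ / log ρ) :=
  (IsEquivalent.refl.div (isEquivalent_log_const_mul hk)).congr_right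
    (.of_forall fun ρ => mul_div_assoc k ρ (log ρ))

lemma tendsto_quotient_of_isEquivalent_div_log {J p : ℝ → ℝ} {A k : ℝ} (hk : 0 < k)
    (hJ : J ~[atTop] fun T => A * (T / log T)) (hp : p ~[atTop] fun ρ => ρ / log ρ) :
    Tendsto (fun ρ => J (k * ρ) / p ρ) atTop (nhds (A * k)) := by
  have hJk : (fun ρ => J (k * ρ)) ~[atTop] fun ρ => A * (k * (ρ / log ρ)) :=
    (hJ.comp_tendsto (tendsto_id.const_mul_atTop hk)).trans
      (IsEquivalent.refl.mul (isEquivalent_const_mul_div_log hk.ne'))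
  refine (hJk.div hp).symm.tendsto_nhds (tendsto_const_nhds.congr' ?_)
  filter_upwards [eventually_gt_atTop 1] with ρ hρ
  have hdiv : ρ / log ρ ≠ 0 := div_ne_zero (by linarith) (log_pos hρ).ne'
  simp only [Pi.div_apply, ← mul_assoc]
  exact (mul_div_cancel_right₀ _ hdiv).symm

section IntegralIncrement

variable {f N g p : ℝ → ℝ} {b α β : ℝ}

lemma isEquivalent_integral_increment (hαβ : α * β ≠ 0)
    (hf : ∀ᶠ G in atTop, IntervalIntegrable f volume b (N G))
    (hN : (fun G => (∫ t in b..N G, f t) - α * G) =O[atTop] (fun _ => (1 : ℝ)))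
    (hg : (fun T => g T - T) ~[atTop] fun T => β * T / log T) :
    (fun T => ∫ t in N T..N (g T), f t) ~[atTop] fun T => α * β * (T / log T) := by
  obtain ⟨hα, hβ⟩ := mul_ne_zero_iff.mp hαβ
  simp only [mul_div_assoc] at hg
  have hg_top : Tendsto g atTop atTop :=
    tendsto_atTop_of_sub_isLittleO (hg.trans_isLittleO (isLittleO_div_log_id.const_mul_left β))
  have hincr := isEquivalent_sub_of_sub_mul_isBigO_one hα hN hg_top tendsto_id hg
    (isLittleO_one_div_log.const_mul_right hβ)
  simp only [← mul_assoc] at hincr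
  refine hincr.congr_left ?_
  filter_upwards [hf, hg_top.eventually hf] with T hT hgT
  exact intervalIntegral.integral_interval_sub_left hgT hT

theorem stmt_13_general (hαβ : 0 < α * β)
    (hf : ∀ᶠ G in atTop, IntervalIntegrable f volume b (N G))
    (hN : (fun G => (∫ t in b..N G, f t) - α * G) =O[atTop] (fun _ => (1 : ℝ)))
    (hg : (fun T => g T - T) ~[atTop] fun T => β * T / log T)
    (hp : p ~[atTop] fun ρ => ρ / log ρ) {F L : ℝ} (hF : 0 < F) :
    Tendsto (fun ρ => (1 / p ρ) * ∫ t in N (F * ρ / (α * β))..N (g (F * ρ / (α * β))), f t)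
      atTop (nhds L) ↔ F = L := by
  have hlim := tendsto_quotient_of_isEquivalent_div_log (div_pos hF hαβ)
    (isEquivalent_integral_increment hαβ.ne' hf hN hg) hp
  simp only [mul_div_cancel₀ F hαβ.ne', div_mul_eq_mul_div] at hlim
  simp only [one_div_mul_eq_div]
  exact ⟨tendsto_nhds_unique hlim, fun h => h ▸ hlim⟩

end IntegralIncrement

lemma a_mul_one_sub_c_pos : 0 < a * (1 - c) :=
  mul_pos (exp_pos _) (sub_pos.mpr (eulerMascheroniConstant_lt_two_thirds.trans (by norm_num)))

lemma intervalIntegrable_one_div_log_s13 {x y : ℝ} (hx : 1 < x) (hy : 1 < y) :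
    IntervalIntegrable (fun u => 1 / log u) volume x y := by
  have hlog : ∀ u ∈ Set.uIcc x y, log u ≠ 0 := fun u hu =>
    (log_pos ((lt_min hx hy).trans_le hu.1)).ne'
  have hzero : ∀ u ∈ Set.uIcc x y, u ≠ 0 := fun u hu h => hlog u hu (h ▸ log_zero)
  exact (continuousOn_const.div (continuousOn_id.log hzero) hlog).intervalIntegrable

lemma intervalIntegrable_P_s13 {y : ℝ} (hy : 1 < y) : IntervalIntegrable P volume 2 y :=
  monotone_pichar.intervalIntegrable.sub
    (intervalIntegral.continuousOn_primitive_interval'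
      (intervalIntegrable_one_div_log_s13 one_lt_two hy) Set.left_mem_uIcc).intervalIntegrable

lemma natCast_pow_add_pow_div_pow_eq_one_iff {x y z n : ℕ} (hz : 0 < z) :
    ((x ^ n + y ^ n : ℝ) / (z ^ n : ℝ)) = 1 ↔ x ^ n + y ^ n = z ^ n := by
  rw [div_eq_one_iff_eq (by positivity)]
  norm_cast

/-- Theorem 6: the second `Pζ`-condition on the set of all Fermat rationals is
equivalent to the Fermat–Wiles theorem. -/
theorem stmt_13 (N₁ : ℝ → ℝ)
    (hN2 : ∀ᶠ G in atTop, 2 ≤ N₁ G)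
    (hN : (fun G => (∫ t in (2:ℝ)..N₁ G, -P t) - a * G) =O[atTop] (fun _ => (1:ℝ)))
    (g : ℝ → ℝ)
    (hg1 : (fun T => g T - T) ~[atTop] (fun T => (1 - c) * T / Real.log T))
    (hPNT : (fun ρ => pichar ρ) ~[atTop] (fun ρ => ρ / Real.log ρ)) :
    (∀ x y z n : ℕ, 0 < x → 0 < y → 0 < z → 3 ≤ n →
      ¬ Tendsto (fun ρ => (1 / pichar ρ) *
        ∫ t in N₁ (((x ^ n + y ^ n : ℝ) / (z ^ n : ℝ)) * ρ / (a * (1 - c)))..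
          N₁ (g (((x ^ n + y ^ n : ℝ) / (z ^ n : ℝ)) * ρ / (a * (1 - c)))), -P t)
        atTop (nhds 1)) ↔
    (∀ x y z n : ℕ, 0 < x → 0 < y → 0 < z → 3 ≤ n → x ^ n + y ^ n ≠ z ^ n) := by
  have hP : ∀ᶠ G in atTop, IntervalIntegrable (fun t => -P t) volume 2 (N₁ G) :=
    hN2.mono fun G hG => (intervalIntegrable_P_s13 (one_lt_two.trans_le hG)).neg
  refine forall₄_congr fun x y z n => forall₄_congr fun hx hy hz _ => not_congr ?_
  have hF : 0 < (x ^ n + y ^ n : ℝ) / (z ^ n : ℝ) := by positivity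
  exact (stmt_13_general a_mul_one_sub_c_pos hP hN hg1 hPNT hF).trans
    (natCast_pow_add_pow_div_pow_eq_one_iff hz)
end
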